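/- Let c > 0. For η ∈ ℂ with |Im η| < c let γ(η) be the principal square root of c + iη, and define g(z,η) := (√c/γ(η))·∂_z²(e^{−γ(η)z} sech(√c z)) and g*(z,η) := (1/2)∂_z(e^{γ(−η̄)z} sech(√c z)) (η̄ the complex conjugate of η). Then for every η ∈ ℂ with |Im η| < c: ∫_ℝ g(z,η)·conj(g*(z,η)) dz = iη and ∫_ℝ g(z,η)·conj(g*(z,−η)) dz = 0, where conj denotes complex conjugation. -/

import Mathlib

open MeasureTheory

/-- principal square root of c + iμ -/
noncomputable def gamC (c : ℝ) (μ : ℂ) : ℂ := ((c : ℂ) + Complex.I * μ) ^ ((1 : ℂ)/2)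

/-- g(z,η) = (√c/γ(η)) ∂_z²(e^{−γ(η)z} sech(√c z)) -/
noncomputable def gFun (c : ℝ) (η : ℂ) (z : ℝ) : ℂ :=
  ((Real.sqrt c : ℂ) / gamC c η) *
    deriv (deriv fun w : ℝ =>
      Complex.exp (-gamC c η * (w : ℂ)) * ((Real.cosh (Real.sqrt c * w) : ℝ) : ℂ)⁻¹) z

/-- g*(z,η) = (1/2) ∂_z(e^{γ(−η̄)z} sech(√c z)) -/
noncomputable def gStar (c : ℝ) (η : ℂ) (z : ℝ) : ℂ :=
  (1/2 : ℂ) *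
    deriv (fun w : ℝ =>
      Complex.exp (gamC c (-(starRingEnd ℂ η)) * (w : ℂ))
        * ((Real.cosh (Real.sqrt c * w) : ℝ) : ℂ)⁻¹) z

/-!
With `k = √c`, both eigenfunctions are, up to constant factors and conjugation, derivatives of
profiles `y_a(z) = exp(a z) sech(k z)`, which solve
`(cosh² (k z) y_a')' = (a² - k²) cosh² (k z) y_a`. Cross-multiplying the equations for `y_a` and
`y_b` with `y_b'` and `y_a'`, and integrating by parts, gives
`∫ y_a'' y_b' = (a² + b² - 2 k²) (b - a) / 4 * ∫ y_a y_b`.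
Here `a = -γ(η)` and `b = γ(±η)`. For the lower sign `γ(η)² + γ(-η)² = 2 k²`, so the first factor
vanishes; for the upper sign `y_a y_b = sech² (k z)`, whose integral is `2 / k`.
-/

open Filter Topology ComplexConjugate

section Tanh

lemma hasDerivAt_tanh (x : ℝ) : HasDerivAt Real.tanh (1 - Real.tanh x ^ 2) x := by
  have hne : Real.cosh x ≠ 0 := (Real.cosh_pos x).ne'
  have h := (Real.hasDerivAt_sinh x).div (Real.hasDerivAt_cosh x) hne
  refine (h.congr_deriv ?_).congr_of_eventuallyEq (.of_forall Real.tanh_eq_sinh_div_cosh)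
  rw [Real.tanh_eq_sinh_div_cosh]
  field_simp

lemma continuous_tanh : Continuous Real.tanh :=
  continuous_iff_continuousAt.2 fun x => (hasDerivAt_tanh x).continuousAt

lemma strictMono_tanh : StrictMono Real.tanh :=
  strictMono_of_hasDerivAt_pos hasDerivAt_tanh fun x => sub_pos.2 (Real.tanh_sq_lt_one x)

lemma range_tanh : Set.range Real.tanh = Set.Ioo (-1) 1 := by
  rw [← Set.image_univ, Real.tanh_bijOn.image_eq]

lemma tendsto_tanh_atTop : Tendsto Real.tanh atTop (𝓝 1) :=
  tendsto_atTop_isLUB strictMono_tanh.monotone (range_tanh ▸ isLUB_Ioo (by norm_num))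

lemma tendsto_tanh_atBot : Tendsto Real.tanh atBot (𝓝 (-1)) :=
  tendsto_atBot_isGLB strictMono_tanh.monotone (range_tanh ▸ isGLB_Ioo (by norm_num))

lemma hasDerivAt_ofReal_tanh_const_mul (k z : ℝ) :
    HasDerivAt (fun w : ℝ => (Real.tanh (k * w) : ℂ))
      (k * (1 - (Real.tanh (k * z) : ℂ) ^ 2)) z := by
  have h := ((hasDerivAt_tanh (k * z)).comp z ((hasDerivAt_id z).const_mul k)).ofReal_comp
  refine h.congr_deriv ?_
  push_cast
  ring

lemma inv_cosh_sq (x : ℝ) : (Real.cosh x)⁻¹ ^ 2 = 1 - Real.tanh x ^ 2 := by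
  have hne : Real.cosh x ≠ 0 := (Real.cosh_pos x).ne'
  rw [Real.tanh_eq_sinh_div_cosh]
  field_simp
  linarith [Real.cosh_sq x]

lemma inv_cosh_le_two_mul_exp_neg (x : ℝ) : (Real.cosh x)⁻¹ ≤ 2 * Real.exp (-x) := by
  rw [inv_le_iff_one_le_mul₀ (Real.cosh_pos x), Real.cosh_eq, mul_div_assoc', le_div_iff₀ two_pos]
  have hinv : Real.exp (-x) * Real.exp x = 1 := by
    rw [← Real.exp_add, neg_add_cancel, Real.exp_zero]
  nlinarith [sq_nonneg (Real.exp (-x))]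

end Tanh

/-- The profile `exp (a z) sech (k z)`, of which the eigenfunctions `gFun` and `gStar` are
derivatives. The hyperbolic secant is written as the cast of a real number, as it is there. -/
noncomputable def expSech (k : ℝ) (a : ℂ) (z : ℝ) : ℂ :=
  Complex.exp (a * z) * ((Real.cosh (k * z) : ℝ) : ℂ)⁻¹

section ExpSech

variable {k : ℝ} {a b : ℂ}

lemma expSech_neg_left (k : ℝ) (a : ℂ) : expSech (-k) a = expSech k a := by
  ext z
  rw [expSech, expSech, neg_mul, Real.cosh_neg]

lemma expSech_neg_mul_expSech (k : ℝ) (a : ℂ) (z : ℝ) :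
    expSech k (-a) z * expSech k a z = 1 - (Real.tanh (k * z) : ℂ) ^ 2 := by
  have hsech : ((Real.cosh (k * z) : ℝ) : ℂ)⁻¹ ^ 2 = 1 - (Real.tanh (k * z) : ℂ) ^ 2 := by
    exact_mod_cast inv_cosh_sq (k * z)
  rw [← hsech, expSech, expSech, mul_mul_mul_comm, ← Complex.exp_add, neg_mul, neg_add_cancel,
    Complex.exp_zero, one_mul, sq]

lemma conj_expSech (k : ℝ) (a : ℂ) (z : ℝ) : conj (expSech k a z) = expSech k (conj a) z := by
  simp only [expSech, map_mul, map_inv₀, ← Complex.exp_conj, Complex.conj_ofReal]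

lemma hasDerivAt_expSech (k : ℝ) (a : ℂ) (z : ℝ) :
    HasDerivAt (expSech k a) ((a - k * Real.tanh (k * z)) * expSech k a z) z := by
  have hne : (Real.cosh (k * z) : ℂ) ≠ 0 := by exact_mod_cast (Real.cosh_pos (k * z)).ne'
  have hexp := ((hasDerivAt_id z).ofReal_comp.const_mul a).cexp
  have hcosh := ((hasDerivAt_id z).const_mul k).cosh.ofReal_comp
  refine (hexp.mul (hcosh.fun_inv hne)).congr_deriv ?_
  rw [expSech, Real.tanh_eq_sinh_div_cosh]
  push_cast [id] at hne ⊢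
  generalize Complex.cosh (k * z) = C at hne ⊢
  field_simp
  ring

lemma deriv_expSech (k : ℝ) (a : ℂ) :
    deriv (expSech k a) = fun z => (a - k * Real.tanh (k * z)) * expSech k a z :=
  funext fun z => (hasDerivAt_expSech k a z).deriv

/-- The Sturm–Liouville equation `(cosh² y')' = (a² - k²) cosh² y`, divided by `cosh²`. -/
lemma hasDerivAt_deriv_expSech (k : ℝ) (a : ℂ) (z : ℝ) :
    HasDerivAt (deriv (expSech k a))
      ((a ^ 2 - k ^ 2) * expSech k a z - 2 * k * Real.tanh (k * z) * deriv (expSech k a) z) z := by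
  have htanh := (hasDerivAt_ofReal_tanh_const_mul k z).const_mul (k : ℂ)
  rw [deriv_expSech]
  refine ((htanh.const_sub a).mul (hasDerivAt_expSech k a z)).congr_deriv ?_
  ring

lemma continuous_expSech (k : ℝ) (a : ℂ) : Continuous (expSech k a) :=
  continuous_iff_continuousAt.2 fun z => (hasDerivAt_expSech k a z).continuousAt

lemma norm_expSech_le (k : ℝ) (a : ℂ) (z : ℝ) :
    ‖expSech k a z‖ ≤ 2 * Real.exp ((a.re - k) * z) := by
  calc ‖expSech k a z‖ = Real.exp (a.re * z) * (Real.cosh (k * z))⁻¹ := by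
        rw [expSech, norm_mul, Complex.norm_exp, Complex.re_mul_ofReal, norm_inv,
          Complex.norm_of_nonneg (Real.cosh_pos _).le]
    _ ≤ Real.exp (a.re * z) * (2 * Real.exp (-(k * z))) := by
        gcongr
        exact inv_cosh_le_two_mul_exp_neg (k * z)
    _ = 2 * Real.exp ((a.re - k) * z) := by
        rw [mul_left_comm, ← Real.exp_add]
        ring_nf

lemma norm_expSech_mul_expSech_le (k : ℝ) (a b : ℂ) (z : ℝ) :
    ‖expSech k a z * expSech k b z‖ ≤ 4 * Real.exp (((a + b).re - 2 * k) * z) := by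
  calc ‖expSech k a z * expSech k b z‖
      ≤ 2 * Real.exp ((a.re - k) * z) * (2 * Real.exp ((b.re - k) * z)) :=
        norm_mul_le_of_le (norm_expSech_le k a z) (norm_expSech_le k b z)
    _ = 4 * Real.exp (((a + b).re - 2 * k) * z) := by
        rw [mul_mul_mul_comm, ← Real.exp_add, Complex.add_re]
        ring_nf

lemma integrable_expSech_mul_expSech (h : |(a + b).re| < 2 * k) :
    Integrable fun z => expSech k a z * expSech k b z := by
  obtain ⟨hlower, hupper⟩ := abs_lt.1 h
  have hmeas : AEStronglyMeasurable fun z => expSech k a z * expSech k b z :=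
    ((continuous_expSech k a).mul (continuous_expSech k b)).aestronglyMeasurable
  have hneg (z : ℝ) : ‖expSech k a z * expSech k b z‖ ≤
      4 * Real.exp (((a + b).re - 2 * -k) * z) := by
    simpa only [expSech_neg_left] using norm_expSech_mul_expSech_le (-k) a b z
  rw [← integrableOn_univ, ← Set.Iic_union_Ioi (a := (0 : ℝ))]
  refine IntegrableOn.union ?_ ?_
  · exact ((integrableOn_exp_mul_Iic (by linarith) 0).const_mul 4).mono' hmeas.restrict
      (.of_forall hneg)
  · exact ((integrableOn_exp_mul_Ioi (by linarith) 0).const_mul 4).mono' hmeas.restrict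
      (.of_forall (norm_expSech_mul_expSech_le k a b))

lemma integrable_tanh_mul {f : ℝ → ℂ} (hf : Integrable f) (k : ℝ) :
    Integrable fun z => (Real.tanh (k * z) : ℂ) * f z := by
  refine hf.bdd_mul (c := 1) ?_ (.of_forall fun z => ?_)
  · exact (Complex.continuous_ofReal.comp
      (continuous_tanh.comp (continuous_const_mul k))).aestronglyMeasurable
  · rw [Complex.norm_real]
    exact (Real.abs_tanh_lt_one _).le

lemma integrable_deriv_expSech_mul {f : ℝ → ℂ} (hf : Integrable fun z => expSech k a z * f z) :
    Integrable fun z => deriv (expSech k a) z * f z := by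
  refine ((hf.const_mul a).sub ((integrable_tanh_mul hf k).const_mul (k : ℂ))).congr
    (.of_forall fun z => ?_)
  simp only [deriv_expSech, Pi.sub_apply]
  ring

lemma integrable_deriv_deriv_expSech_mul {f : ℝ → ℂ}
    (hf : Integrable fun z => expSech k a z * f z) :
    Integrable fun z => deriv (deriv (expSech k a)) z * f z := by
  have hf' := integrable_tanh_mul (integrable_deriv_expSech_mul hf) k
  refine ((hf.const_mul (a ^ 2 - k ^ 2)).sub (hf'.const_mul (2 * k))).congr
    (.of_forall fun z => ?_)
  simp only [(hasDerivAt_deriv_expSech k a z).deriv, Pi.sub_apply]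
  ring

lemma integrable_expSech_mul_deriv_expSech (h : |(a + b).re| < 2 * k) :
    Integrable fun z => expSech k a z * deriv (expSech k b) z := by
  have hba : |(b + a).re| < 2 * k := by rwa [add_comm]
  simpa only [mul_comm] using integrable_deriv_expSech_mul (integrable_expSech_mul_expSech hba)

lemma integrable_deriv_expSech_mul_deriv_deriv_expSech (h : |(a + b).re| < 2 * k) :
    Integrable fun z => deriv (expSech k a) z * deriv (deriv (expSech k b)) z := by
  have hba : |(b + a).re| < 2 * k := by rwa [add_comm]
  simpa only [mul_comm] using
    integrable_deriv_deriv_expSech_mul (integrable_expSech_mul_deriv_expSech hba)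

lemma integral_deriv_expSech_mul_expSech_eq_neg (h : |(a + b).re| < 2 * k) :
    ∫ z, deriv (expSech k a) z * expSech k b z = -∫ z, expSech k a z * deriv (expSech k b) z := by
  rw [integral_mul_deriv_eq_deriv_mul_of_integrable
    (fun z _ => (hasDerivAt_expSech k a z).differentiableAt.hasDerivAt)
    (fun z _ => (hasDerivAt_expSech k b z).differentiableAt.hasDerivAt)
    (integrable_expSech_mul_deriv_expSech h)
    (integrable_deriv_expSech_mul (integrable_expSech_mul_expSech h))
    (integrable_expSech_mul_expSech h), neg_neg]

lemma integral_deriv_deriv_expSech_mul_deriv_expSech_eq_neg (h : |(a + b).re| < 2 * k) :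
    ∫ z, deriv (deriv (expSech k a)) z * deriv (expSech k b) z =
      -∫ z, deriv (expSech k a) z * deriv (deriv (expSech k b)) z := by
  have hab := integrable_expSech_mul_deriv_expSech h
  rw [integral_mul_deriv_eq_deriv_mul_of_integrable
    (fun z _ => (hasDerivAt_deriv_expSech k a z).differentiableAt.hasDerivAt)
    (fun z _ => (hasDerivAt_deriv_expSech k b z).differentiableAt.hasDerivAt)
    (integrable_deriv_expSech_mul_deriv_deriv_expSech h) (integrable_deriv_deriv_expSech_mul hab)
    (integrable_deriv_expSech_mul hab), neg_neg]

lemma integral_expSech_mul_deriv_expSech (h : |(a + b).re| < 2 * k) :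
    ∫ z, expSech k a z * deriv (expSech k b) z =
      (b - a) / 2 * ∫ z, expSech k a z * expSech k b z := by
  have hwronskian : (∫ z, expSech k a z * deriv (expSech k b) z) -
      ∫ z, deriv (expSech k a) z * expSech k b z =
        (b - a) * ∫ z, expSech k a z * expSech k b z := by
    rw [← integral_sub (integrable_expSech_mul_deriv_expSech h)
      (integrable_deriv_expSech_mul (integrable_expSech_mul_expSech h)), ← integral_const_mul]
    refine integral_congr_ae (.of_forall fun z => ?_)
    simp only [deriv_expSech]
    ring
  rw [integral_deriv_expSech_mul_expSech_eq_neg h] at hwronskian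
  linear_combination hwronskian / 2

lemma integral_deriv_deriv_expSech_mul_deriv_expSech (h : |(a + b).re| < 2 * k) :
    ∫ z, deriv (deriv (expSech k a)) z * deriv (expSech k b) z =
      (a ^ 2 + b ^ 2 - 2 * k ^ 2) * (b - a) / 4 * ∫ z, expSech k a z * expSech k b z := by
  have hab := integrable_expSech_mul_deriv_expSech h
  -- The `tanh` terms of the two equations cancel.
  have hcross : (∫ z, deriv (deriv (expSech k a)) z * deriv (expSech k b) z) -
      ∫ z, deriv (expSech k a) z * deriv (deriv (expSech k b)) z =
        (a ^ 2 - k ^ 2) * (∫ z, expSech k a z * deriv (expSech k b) z) -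
          (b ^ 2 - k ^ 2) * ∫ z, deriv (expSech k a) z * expSech k b z := by
    rw [← integral_sub (integrable_deriv_deriv_expSech_mul hab)
        (integrable_deriv_expSech_mul_deriv_deriv_expSech h),
      ← integral_const_mul, ← integral_const_mul, ← integral_sub (hab.const_mul _)
        ((integrable_deriv_expSech_mul (integrable_expSech_mul_expSech h)).const_mul _)]
    refine integral_congr_ae (.of_forall fun z => ?_)
    simp only [(hasDerivAt_deriv_expSech k _ z).deriv]
    ring
  have hparts := integral_deriv_deriv_expSech_mul_deriv_expSech_eq_neg h
  rw [integral_deriv_expSech_mul_expSech_eq_neg h, integral_expSech_mul_deriv_expSech h] at hcross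
  linear_combination hcross / 2 + hparts / 2

lemma integral_expSech_neg_mul_expSech (hk : 0 < k) (a : ℂ) :
    ∫ z, expSech k (-a) z * expSech k a z = 2 / k := by
  have hk0 : (k : ℂ) ≠ 0 := by exact_mod_cast hk.ne'
  have hderiv (z : ℝ) : HasDerivAt (fun w : ℝ => (Real.tanh (k * w) : ℂ) / k)
      (expSech k (-a) z * expSech k a z) z := by
    rw [expSech_neg_mul_expSech]
    exact ((hasDerivAt_ofReal_tanh_const_mul k z).div_const (k : ℂ)).congr_deriv
      (mul_div_cancel_left₀ _ hk0)
  have hlim {l l' : Filter ℝ} {t : ℝ} (hl : Tendsto (k * ·) l l')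
      (ht : Tendsto Real.tanh l' (𝓝 t)) :
      Tendsto (fun w : ℝ => (Real.tanh (k * w) : ℂ) / k) l (𝓝 (t / k)) :=
    ((Complex.continuous_ofReal.tendsto t).comp (ht.comp hl)).div_const (k : ℂ)
  rw [integral_of_hasDerivAt_of_tendsto hderiv
    (integrable_expSech_mul_expSech (by simpa using hk))
    (hlim (tendsto_id.const_mul_atBot hk) tendsto_tanh_atBot)
    (hlim (tendsto_id.const_mul_atTop hk) tendsto_tanh_atTop)]
  push_cast
  ring

end ExpSech

section SquareRoot

lemma sq_re_sub_lt_of_abs_im_lt_re {β γ : ℂ} (hβ : |β.im| < β.re) (hγ : |γ.im| < γ.re)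
    (him : (β ^ 2 + γ ^ 2).im = 0) : (β - γ).re ^ 2 < 2 * (β ^ 2 + γ ^ 2).re := by
  wlog hle : γ.re ≤ β.re generalizing β γ
  · rw [← neg_sub, Complex.neg_re, neg_sq, add_comm]
    exact this hγ hβ (by rwa [add_comm]) (le_of_not_ge hle)
  have hβ0 : 0 < β.re := (abs_nonneg _).trans_lt hβ
  have hγ0 : 0 < γ.re := (abs_nonneg _).trans_lt hγ
  simp only [sq, Complex.add_re, Complex.mul_re, Complex.add_im, Complex.mul_im,
    Complex.sub_re] at him ⊢
  have hprod : |β.re * β.im| = |γ.re * γ.im| := by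
    rw [← abs_neg (γ.re * γ.im)]
    congr 1
    linarith
  have him_le : |β.im| ≤ |γ.im| := by
    refine le_of_mul_le_mul_left ?_ hβ0
    calc β.re * |β.im| = γ.re * |γ.im| := by
          rwa [abs_mul, abs_mul, abs_of_pos hβ0, abs_of_pos hγ0] at hprod
      _ ≤ β.re * |γ.im| := by gcongr
  have hβim : β.im ^ 2 ≤ γ.im ^ 2 := sq_le_sq.2 him_le
  have hγim : γ.im ^ 2 < γ.re ^ 2 := sq_lt_sq.2 (by rwa [abs_of_pos hγ0])
  -- `2 (Im β)² + 2 (Im γ)² ≤ 4 (Im γ)² < 4 (Re γ)² ≤ (Re β + Re γ)²`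
  nlinarith [mul_le_mul_of_nonneg_right hle hγ0.le]

variable {c : ℝ} {η : ℂ}

lemma sq_gamC (c : ℝ) (η : ℂ) : gamC c η ^ 2 = c + Complex.I * η := by
  rw [gamC, one_div]
  exact Complex.cpow_ofNat_inv_pow _ 2

lemma re_add_I_mul (c : ℝ) (η : ℂ) : (c + Complex.I * η).re = c - η.im := by
  simp only [Complex.add_re, Complex.ofReal_re, Complex.I_mul_re, sub_eq_add_neg]

lemma re_gamC_pos (h : η.im < c) : 0 < (gamC c η).re := by
  have hre : 0 < (c + Complex.I * η).re := by rwa [re_add_I_mul, sub_pos]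
  rw [gamC, one_div, Complex.cpow_inv_two_re]
  positivity

lemma abs_im_gamC_lt_re (h : η.im < c) : |(gamC c η).im| < (gamC c η).re := by
  have hsq : (gamC c η).re * (gamC c η).re - (gamC c η).im * (gamC c η).im = c - η.im := by
    rw [← Complex.mul_re, ← sq, sq_gamC, re_add_I_mul]
  rw [← abs_of_pos (re_gamC_pos h)]
  exact sq_lt_sq.1 (by linarith)

lemma conj_gamC_neg_conj (h : η.im < c) : conj (gamC c (-conj η)) = gamC c η := by
  have hre : 0 < (c + Complex.I * η).re := by rwa [re_add_I_mul, sub_pos]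
  have harg : (c + Complex.I * η).arg ≠ Real.pi :=
    (Complex.mem_slitPlane_iff_arg.1 (.inl hre)).1
  have hconj : (c : ℂ) + Complex.I * -conj η = conj (c + Complex.I * η) := by
    simp only [map_add, map_mul, Complex.conj_ofReal, Complex.conj_I, neg_mul, mul_neg]
  rw [gamC, hconj, Complex.conj_cpow _ _ harg, Complex.conj_conj, gamC, map_div₀, map_one,
    map_ofNat]

lemma abs_re_neg_gamC_add_gamC_neg_lt (h : |η.im| < c) :
    |(-gamC c η + gamC c (-η)).re| < 2 * √c := by
  obtain ⟨hlower, hupper⟩ := abs_lt.1 h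
  have hc : 0 < c := (abs_nonneg _).trans_lt h
  have hneg : (-η).im < c := by rwa [Complex.neg_im, neg_lt]
  have hsum : gamC c (-η) ^ 2 + gamC c η ^ 2 = (2 * c : ℝ) := by
    rw [sq_gamC, sq_gamC]
    push_cast
    ring
  refine abs_lt_of_sq_lt_sq ?_ (by positivity)
  calc (-gamC c η + gamC c (-η)).re ^ 2
      < 2 * (gamC c (-η) ^ 2 + gamC c η ^ 2).re := by
        rw [neg_add_eq_sub]
        exact sq_re_sub_lt_of_abs_im_lt_re (abs_im_gamC_lt_re hneg) (abs_im_gamC_lt_re hupper)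
          (by rw [hsum, Complex.ofReal_im])
    _ = (2 * √c) ^ 2 := by
        rw [hsum, Complex.ofReal_re, mul_pow, Real.sq_sqrt hc.le]
        ring

end SquareRoot

section Eigenfunctions

variable {c : ℝ} {η ξ : ℂ}

lemma gFun_eq (c : ℝ) (η : ℂ) (z : ℝ) :
    gFun c η z = √c / gamC c η * deriv (deriv (expSech √c (-gamC c η))) z :=
  rfl

lemma conj_gStar (h : η.im < c) (z : ℝ) :
    conj (gStar c η z) = 1 / 2 * deriv (expSech √c (gamC c η)) z := by
  have hconj : (fun w => star (expSech √c (gamC c (-conj η)) w)) = expSech √c (gamC c η) :=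
    funext fun w => by rw [← starRingEnd_apply, conj_expSech, conj_gamC_neg_conj h]
  rw [← hconj, deriv.star, gStar, map_mul, map_div₀, map_one, map_ofNat]
  rfl

lemma integral_gFun_mul_conj_gStar (hξ : ξ.im < c)
    (h : |(-gamC c η + gamC c ξ).re| < 2 * √c) :
    ∫ z, gFun c η z * conj (gStar c ξ z) =
      √c / gamC c η * (Complex.I * (η + ξ)) * (gamC c η + gamC c ξ) / 8 *
        ∫ z, expSech √c (-gamC c η) z * expSech √c (gamC c ξ) z := by
  have hc : 0 < √c := pos_of_mul_pos_right ((abs_nonneg _).trans_lt h) zero_le_two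
  have hsq : (√c : ℂ) ^ 2 = c := by exact_mod_cast Real.sq_sqrt (Real.sqrt_pos.1 hc).le
  simp only [gFun_eq, conj_gStar hξ, mul_mul_mul_comm]
  rw [integral_const_mul, integral_deriv_deriv_expSech_mul_deriv_expSech h,
    neg_sq, sq_gamC, sq_gamC, hsq]
  ring

end Eigenfunctions

/-- orthogonality relations between the resonant continuous
eigenfunctions of the linearized KP-II operator around a line soliton and
those of its adjoint. -/
theorem resonant_mode_orthogonality (c : ℝ) (hc : 0 < c) :
    ∀ η : ℂ, |η.im| < c →
      (∫ z : ℝ, gFun c η z * (starRingEnd ℂ) (gStar c η z)) = Complex.I * η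
      ∧ (∫ z : ℝ, gFun c η z * (starRingEnd ℂ) (gStar c (-η) z)) = 0 := by
  intro η hη
  have hc0 : (√c : ℂ) ≠ 0 := by exact_mod_cast (Real.sqrt_pos.2 hc).ne'
  have hupper : η.im < c := (abs_lt.1 hη).2
  have hγ0 : gamC c η ≠ 0 := fun h => (re_gamC_pos hupper).ne' (by rw [h, Complex.zero_re])
  constructor
  · have hstrip : |(-gamC c η + gamC c η).re| < 2 * √c := by simpa using hc
    rw [integral_gFun_mul_conj_gStar hupper hstrip,
      integral_expSech_neg_mul_expSech (Real.sqrt_pos.2 hc)]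
    field_simp
    ring
  · have hneg : (-η).im < c := by rw [Complex.neg_im]; exact neg_lt.1 (abs_lt.1 hη).1
    rw [integral_gFun_mul_conj_gStar hneg (abs_re_neg_gamC_add_gamC_neg_lt hη), add_neg_cancel]
    simp only [mul_zero, zero_mul, zero_div]
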